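/- arXiv:1507.08695 — 2 statements merged into one kernel-verified Lean document; each statement's English description precedes it below -/
import Mathlib

section
/- Let X be a Banach space, let N ≥ 2, and let P₁,…,P_N be projections on X. Set T = (P₁ + ⋯ + P_N)/N. Suppose α ≥ 0 and β ≥ 0 are constants such that ‖P_i‖ ≤ β for every 1 ≤ i ≤ N, such that ‖(P_i P_j − P_j P_i)v‖ ≤ α·‖(P_i − P_j)v‖ for all 1 ≤ i < j ≤ N and all v ∈ X, and such that (2N−3)·α < 1 and (N−2)·β < N − 1 − (2N−3)·α. Then there exist constants r with 0 ≤ r < 1 and C ≥ 0 and a bounded linear operator T^∞ on X such that ‖T^∞ − Tⁿ‖ ≤ C·rⁿ for every n ∈ ℕ, T^∞ is a projection, and range(T^∞) = ⋂_{i=1}^N range(P_i). -/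
open Finset

/-!
The mean `T` contracts the largest of the differences `P i v - P j v`: expanding
`P i (T v) - P j (T v)` as a mean over `k`, the terms `k = i` and `k = j` together give
`P i v - P j v` plus a commutator, and every other term is `P k (P i v - P j v)` plus two
commutators. The increments of `Tⁿ⁺¹` are in turn controlled by these differences, so that `Tⁿ`
converges geometrically, and its limit projects onto the fixed points of `T`. At a fixed point of
`T` the contraction forces the differences to vanish, hence each `P i` fixes it too.
-/

theorem range_eq_fixedPoints_of_apply_apply {α : Type*} {f : α → α} (hf : ∀ x, f (f x) = f x) :
    Set.range f = Function.fixedPoints f := by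
  ext x
  exact ⟨by rintro ⟨y, rfl⟩; exact hf y, fun hx ↦ ⟨x, hx⟩⟩

section PowersLimit

open Filter Topology

theorem mul_eq_right_of_tendsto_pow {M : Type*} [Monoid M] [TopologicalSpace M] [T2Space M]
    [SeparatelyContinuousMul M] {a s : M} (h : Tendsto (a ^ ·) atTop (𝓝 s)) : a * s = s := by
  have hsucc : Tendsto (fun n ↦ a * a ^ n) atTop (𝓝 s) := by
    simpa only [pow_succ'] using (tendsto_add_atTop_iff_nat 1).2 h
  exact tendsto_nhds_unique (h.const_mul a) hsucc

theorem isIdempotentElem_of_tendsto_pow {M : Type*} [Monoid M] [TopologicalSpace M] [T2Space M]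
    [SeparatelyContinuousMul M] {a s : M} (h : Tendsto (a ^ ·) atTop (𝓝 s)) :
    IsIdempotentElem s := by
  have hpow (n : ℕ) : a ^ n * s = s := by
    induction n with
    | zero => rw [pow_zero, one_mul]
    | succ n ih => rw [pow_succ, mul_assoc, mul_eq_right_of_tendsto_pow h, ih]
  exact tendsto_nhds_unique (h.mul_const s) (by simp only [hpow, tendsto_const_nhds])

theorem range_eq_fixedPoints_of_tendsto_pow {𝕜 X : Type*} [NontriviallyNormedField 𝕜]
    [NormedAddCommGroup X] [NormedSpace 𝕜 X] {T S : X →L[𝕜] X}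
    (h : Tendsto (T ^ ·) atTop (𝓝 S)) : Set.range S = Function.fixedPoints T := by
  ext v
  constructor
  · rintro ⟨w, rfl⟩
    exact DFunLike.congr_fun (mul_eq_right_of_tendsto_pow h) w
  · intro hv
    have hpow (n : ℕ) : (T ^ n) v = v := by
      rw [FunLike.coe_pow_eq_iterate]
      exact hv.iterate n
    have happly : Tendsto (fun n ↦ (T ^ n) v) atTop (𝓝 (S v)) :=
      ((ContinuousLinearMap.apply 𝕜 X v).continuous.tendsto S).comp h
    exact ⟨v, tendsto_nhds_unique happly (by simp only [hpow, tendsto_const_nhds])⟩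

theorem exists_norm_sub_le_geometric {E : Type*} [SeminormedAddCommGroup E] [CompleteSpace E]
    {u : ℕ → E} {r K : ℝ} (hr₀ : 0 < r) (hr₁ : r < 1)
    (hu : ∀ n, ‖u (n + 2) - u (n + 1)‖ ≤ K * r ^ n) :
    ∃ C x, 0 ≤ C ∧ ∀ n, ‖x - u n‖ ≤ C * r ^ n := by
  set B := max ‖u 1 - u 0‖ (K / r)
  have hB : ∀ n, dist (u n) (u (n + 1)) ≤ B * r ^ n := by
    intro n
    rw [dist_comm, dist_eq_norm]
    cases n with
    | zero => simpa only [pow_zero, mul_one] using le_max_left _ _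
    | succ n =>
      calc ‖u (n + 2) - u (n + 1)‖ ≤ K * r ^ n := hu n
        _ = K / r * r ^ (n + 1) := by rw [pow_succ']; field_simp
        _ ≤ B * r ^ (n + 1) := by gcongr; exact le_max_right _ _
  obtain ⟨x, hx⟩ := cauchySeq_tendsto_of_complete (cauchySeq_of_le_geometric r B hr₁ hB)
  have hB₀ : 0 ≤ B := (norm_nonneg _).trans (le_max_left _ _)
  refine ⟨B / (1 - r), x, div_nonneg hB₀ (sub_nonneg.2 hr₁.le), fun n ↦ ?_⟩
  rw [← dist_eq_norm, dist_comm, div_mul_eq_mul_div]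
  exact dist_le_of_le_geometric_of_tendsto r B hr₁ hB hx n

end PowersLimit

section ContractedMap

variable {𝕜 X Y : Type*} [NontriviallyNormedField 𝕜] [SeminormedAddCommGroup X] [NormedSpace 𝕜 X]
  [SeminormedAddCommGroup Y] [NormedSpace 𝕜 Y] {T : X →L[𝕜] X} {D : X →L[𝕜] Y} {r K : ℝ}

theorem norm_map_pow_apply_le (hr : 0 ≤ r) (hD : ∀ v, ‖D (T v)‖ ≤ r * ‖D v‖) (n : ℕ) (v : X) :
    ‖D ((T ^ n) v)‖ ≤ r ^ n * ‖D v‖ := by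
  induction n with
  | zero => simp
  | succ n ih =>
    calc ‖D ((T ^ (n + 1)) v)‖ = ‖D (T ((T ^ n) v))‖ := by rw [pow_succ']; rfl
      _ ≤ r * (r ^ n * ‖D v‖) := (hD _).trans (by gcongr)
      _ = r ^ (n + 1) * ‖D v‖ := by ring

theorem norm_pow_add_two_sub_pow_add_one_le (hr : 0 ≤ r) (hK : 0 ≤ K)
    (hD : ∀ v, ‖D (T v)‖ ≤ r * ‖D v‖) (hT : ∀ v, ‖T (T v) - T v‖ ≤ K * ‖D v‖) (n : ℕ) :
    ‖T ^ (n + 2) - T ^ (n + 1)‖ ≤ K * ‖D‖ * r ^ n := by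
  refine ContinuousLinearMap.opNorm_le_bound _ (by positivity) fun v ↦ ?_
  calc ‖(T ^ (n + 2) - T ^ (n + 1)) v‖
      = ‖T (T ((T ^ n) v)) - T ((T ^ n) v)‖ := by rw [pow_succ', pow_succ']; rfl
    _ ≤ K * ‖D ((T ^ n) v)‖ := hT _
    _ ≤ K * (r ^ n * (‖D‖ * ‖v‖)) := by
      gcongr
      exact (norm_map_pow_apply_le hr hD n v).trans (by gcongr; exact D.le_opNorm v)
    _ = K * ‖D‖ * r ^ n * ‖v‖ := by ring

end ContractedMap

section CommutesUpTo

variable {𝕜 X : Type*} [NontriviallyNormedField 𝕜] [SeminormedAddCommGroup X] [NormedSpace 𝕜 X]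
  {A B C : X →L[𝕜] X} {α β : ℝ}

/-- The commutator of `A` and `B` is pointwise bounded by `α` times their difference: the
quantitative form of commutation in which the closeness of the projections is measured. -/
def CommutesUpTo (α : ℝ) (A B : X →L[𝕜] X) : Prop :=
  ∀ v, ‖A (B v) - B (A v)‖ ≤ α * ‖A v - B v‖

theorem CommutesUpTo.refl (α : ℝ) (A : X →L[𝕜] X) : CommutesUpTo α A A := fun v ↦ by simp

theorem CommutesUpTo.symm (h : CommutesUpTo α A B) : CommutesUpTo α B A := fun v ↦ by
  rw [norm_sub_rev, norm_sub_rev (B v)]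
  exact h v

theorem commutesUpTo_of_forall_lt {ι : Type*} [LinearOrder ι] {P : ι → X →L[𝕜] X}
    (h : ∀ i j, i < j → CommutesUpTo α (P i) (P j)) (i j : ι) : CommutesUpTo α (P i) (P j) := by
  rcases lt_trichotomy i j with hij | rfl | hji
  · exact h i j hij
  · exact .refl α (P i)
  · exact (h j i hji).symm

theorem CommutesUpTo.norm_apply_sub_le (h : CommutesUpTo α A B) (hB : IsIdempotentElem B)
    (hβ : ‖B‖ ≤ β) (v : X) : ‖A (B v) - B v‖ ≤ (α + β) * ‖A v - B v‖ := by
  have hBB : B (B v) = B v := DFunLike.congr_fun hB v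
  calc ‖A (B v) - B v‖ = ‖(A (B v) - B (A v)) + B (A v - B v)‖ := by
        rw [map_sub, hBB, sub_add_sub_cancel]
    _ ≤ α * ‖A v - B v‖ + β * ‖A v - B v‖ := norm_add_le_of_le (h v) (B.le_of_opNorm_le hβ _)
    _ = (α + β) * ‖A v - B v‖ := by ring

theorem CommutesUpTo.norm_sub_apply_add_sub_apply_le (h : CommutesUpTo α A B)
    (hA : IsIdempotentElem A) (hB : IsIdempotentElem B) (v : X) :
    ‖(A (A v) - B (A v)) + (A (B v) - B (B v))‖ ≤ (1 + α) * ‖A v - B v‖ := by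
  have hAA : A (A v) = A v := DFunLike.congr_fun hA v
  have hBB : B (B v) = B v := DFunLike.congr_fun hB v
  calc ‖(A (A v) - B (A v)) + (A (B v) - B (B v))‖
      = ‖(A v - B v) + (A (B v) - B (A v))‖ := by rw [hAA, hBB]; congr 1; abel
    _ ≤ ‖A v - B v‖ + α * ‖A v - B v‖ := norm_add_le_of_le le_rfl (h v)
    _ = (1 + α) * ‖A v - B v‖ := by ring

theorem CommutesUpTo.norm_sub_apply_le (hAC : CommutesUpTo α A C) (hBC : CommutesUpTo α B C)
    (hβ : ‖C‖ ≤ β) (v : X) :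
    ‖A (C v) - B (C v)‖ ≤ β * ‖A v - B v‖ + α * ‖A v - C v‖ + α * ‖B v - C v‖ := by
  calc ‖A (C v) - B (C v)‖
      = ‖C (A v - B v) + (A (C v) - C (A v)) - (B (C v) - C (B v))‖ := by
        rw [map_sub]; congr 1; abel
    _ ≤ β * ‖A v - B v‖ + α * ‖A v - C v‖ + α * ‖B v - C v‖ :=
      norm_sub_le_of_le (norm_add_le_of_le (C.le_of_opNorm_le hβ _) (hAC v)) (hBC v)

end CommutesUpTo

theorem norm_sum_le_add_card_sub_two_mul {ι E : Type*} [Fintype ι] [SeminormedAddCommGroup E]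
    {f : ι → E} {i j : ι} (hij : i ≠ j) {a b : ℝ} (ha : ‖f i + f j‖ ≤ a)
    (hb : ∀ k, k ≠ i → k ≠ j → ‖f k‖ ≤ b) :
    ‖∑ k, f k‖ ≤ a + (Fintype.card ι - 2) * b := by
  classical
  have hcard : ((({i, j} : Finset ι)ᶜ).card : ℝ) = Fintype.card ι - 2 := by
    rw [eq_sub_iff_add_eq]
    exact_mod_cast card_pair hij ▸ card_compl_add_card {i, j}
  have hrest : ‖∑ k ∈ ({i, j} : Finset ι)ᶜ, f k‖ ≤ (Fintype.card ι - 2) * b := by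
    rw [← hcard, ← nsmul_eq_mul]
    refine (norm_sum_le _ _).trans (sum_le_card_nsmul _ _ _ fun k hk ↦ ?_)
    simp only [mem_compl, mem_insert, mem_singleton, not_or] at hk
    exact hb k hk.1 hk.2
  rw [← sum_add_sum_compl {i, j} f, sum_pair hij]
  exact norm_add_le_of_le ha hrest

section ArithMean

variable {ι : Type*} [Fintype ι]

/-- The arithmetic mean of a finite family, with the reciprocal of the number of its members taken
in `𝕜`. It is applied both to the projections and to their values at a vector. -/
noncomputable def arithMean (𝕜 : Type*) {E : Type*} [DivisionRing 𝕜] [AddCommMonoid E]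
    [Module 𝕜 E] (x : ι → E) : E :=
  (Fintype.card ι : 𝕜)⁻¹ • ∑ i, x i

theorem map_arithMean {𝕜 E F G : Type*} [DivisionRing 𝕜] [AddCommMonoid E] [Module 𝕜 E]
    [AddCommMonoid F] [Module 𝕜 F] [FunLike G E F] [LinearMapClass G 𝕜 E F] (g : G) (x : ι → E) :
    g (arithMean 𝕜 x) = arithMean 𝕜 fun i ↦ g (x i) := by
  simp only [arithMean, map_smul, map_sum]

theorem arithMean_apply {𝕜 E F : Type*} [NormedField 𝕜] [SeminormedAddCommGroup E]
    [NormedSpace 𝕜 E] [SeminormedAddCommGroup F] [NormedSpace 𝕜 F] (P : ι → E →L[𝕜] F) (v : E) :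
    arithMean 𝕜 P v = arithMean 𝕜 fun i ↦ P i v := by
  simp only [arithMean, _root_.smul_apply, _root_.sum_apply]

theorem arithMean_sub {𝕜 E : Type*} [DivisionRing 𝕜] [AddCommGroup E] [Module 𝕜 E] (x y : ι → E) :
    (arithMean 𝕜 fun i ↦ x i - y i) = arithMean 𝕜 x - arithMean 𝕜 y := by
  simp only [arithMean, sum_sub_distrib, smul_sub]

theorem arithMean_const {𝕜 E : Type*} [DivisionRing 𝕜] [CharZero 𝕜] [AddCommMonoid E] [Module 𝕜 E]
    [Nonempty ι] (y : E) : (arithMean 𝕜 fun _ : ι ↦ y) = y := by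
  rw [arithMean, sum_const, card_univ, ← Nat.cast_smul_eq_nsmul 𝕜,
    inv_smul_smul₀ (Nat.cast_ne_zero.2 Fintype.card_ne_zero)]

variable {𝕜 E : Type*} [RCLike 𝕜] [SeminormedAddCommGroup E] [NormedSpace 𝕜 E]

theorem norm_arithMean (x : ι → E) : ‖arithMean 𝕜 x‖ = ‖∑ i, x i‖ / Fintype.card ι := by
  rw [arithMean, norm_smul, norm_inv, RCLike.norm_natCast, inv_mul_eq_div]

theorem norm_arithMean_le [Nonempty ι] {x : ι → E} {c : ℝ} (hx : ∀ i, ‖x i‖ ≤ c) :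
    ‖arithMean 𝕜 x‖ ≤ c := by
  rw [norm_arithMean, div_le_iff₀' (Nat.cast_pos.2 Fintype.card_pos), ← nsmul_eq_mul]
  exact (norm_sum_le _ _).trans (sum_le_card_nsmul _ _ _ fun i _ ↦ hx i)

end ArithMean

section Rate

variable {N : ℕ} {α β : ℝ}

/-- The factor by which the mean of `N` projections, of norm at most `β` and commuting up to `α`,
contracts their spread: `1 + α` from the two terms of a pair, `β + 2 * α` from each of the `N - 2`
others, divided by `N`. -/
noncomputable def contractionRate (N : ℕ) (α β : ℝ) : ℝ :=
  (1 + α + (N - 2) * (β + 2 * α)) / N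

theorem contractionRate_pos (hN : 2 ≤ N) (hα : 0 ≤ α) (hβ : 0 ≤ β) :
    0 < contractionRate N α β := by
  have hN₂ : (0 : ℝ) ≤ N - 2 := sub_nonneg.2 (by exact_mod_cast hN)
  unfold contractionRate
  positivity

theorem contractionRate_lt_one (hN : 0 < N)
    (h : ((N : ℝ) - 2) * β < N - 1 - (2 * N - 3) * α) : contractionRate N α β < 1 := by
  rw [contractionRate, div_lt_one (Nat.cast_pos.2 hN)]
  linarith

end Rate

section Spread

variable {ι 𝕜 X : Type*} [Fintype ι]

/-- All differences of a family of operators, as one operator: in the sup norm on `ι × ι → X`, the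
norm of `spread P v` is the largest of the `‖P i v - P j v‖`. -/
def spread [NontriviallyNormedField 𝕜] [SeminormedAddCommGroup X] [NormedSpace 𝕜 X]
    (P : ι → X →L[𝕜] X) : X →L[𝕜] (ι × ι → X) :=
  ContinuousLinearMap.pi fun p ↦ P p.1 - P p.2

theorem norm_sub_le_norm_spread [NontriviallyNormedField 𝕜] [SeminormedAddCommGroup X]
    [NormedSpace 𝕜 X] (P : ι → X →L[𝕜] X) (i j : ι) (v : X) :
    ‖P i v - P j v‖ ≤ ‖spread P v‖ :=
  norm_le_pi_norm (spread P v) (i, j)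

variable [RCLike 𝕜] [SeminormedAddCommGroup X] [NormedSpace 𝕜 X] {P : ι → X →L[𝕜] X} {α β : ℝ}

theorem norm_sub_apply_arithMean_le (hproj : ∀ i, IsIdempotentElem (P i)) (hα : 0 ≤ α)
    (hβ : ∀ i, ‖P i‖ ≤ β) (hcomm : ∀ i j, CommutesUpTo α (P i) (P j)) {i j : ι} (hij : i ≠ j)
    (v : X) :
    ‖P i (arithMean 𝕜 P v) - P j (arithMean 𝕜 P v)‖ ≤
      contractionRate (Fintype.card ι) α β * ‖spread P v‖ := by
  set s := ‖spread P v‖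
  have hβ₀ : 0 ≤ β := (norm_nonneg _).trans (hβ i)
  have hs (k l : ι) : ‖P k v - P l v‖ ≤ s := norm_sub_le_norm_spread P k l v
  have hpair : ‖(P i (P i v) - P j (P i v)) + (P i (P j v) - P j (P j v))‖ ≤ (1 + α) * s :=
    ((hcomm i j).norm_sub_apply_add_sub_apply_le (hproj i) (hproj j) v).trans
      (by gcongr; exact hs i j)
  have hother (k : ι) : ‖P i (P k v) - P j (P k v)‖ ≤ (β + 2 * α) * s :=
    calc _ ≤ β * ‖P i v - P j v‖ + α * ‖P i v - P k v‖ + α * ‖P j v - P k v‖ :=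
          (hcomm i k).norm_sub_apply_le (hcomm j k) (hβ k) v
      _ ≤ β * s + α * s + α * s := by gcongr <;> exact hs _ _
      _ = (β + 2 * α) * s := by ring
  rw [arithMean_apply, map_arithMean, map_arithMean, ← arithMean_sub, norm_arithMean]
  calc ‖∑ k, (P i (P k v) - P j (P k v))‖ / Fintype.card ι
      ≤ ((1 + α) * s + (Fintype.card ι - 2) * ((β + 2 * α) * s)) / Fintype.card ι := by
        gcongr
        exact norm_sum_le_add_card_sub_two_mul hij hpair fun k _ _ ↦ hother k
    _ = contractionRate (Fintype.card ι) α β * s := by rw [contractionRate]; ring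

theorem norm_spread_arithMean_le [Nontrivial ι] (hproj : ∀ i, IsIdempotentElem (P i))
    (hα : 0 ≤ α) (hβ : ∀ i, ‖P i‖ ≤ β) (hcomm : ∀ i j, CommutesUpTo α (P i) (P j)) (v : X) :
    ‖spread P (arithMean 𝕜 P v)‖ ≤ contractionRate (Fintype.card ι) α β * ‖spread P v‖ := by
  have hβ₀ : 0 ≤ β := (norm_nonneg _).trans (hβ (Classical.arbitrary ι))
  have hbound : 0 ≤ contractionRate (Fintype.card ι) α β * ‖spread P v‖ :=
    mul_nonneg (contractionRate_pos Fintype.one_lt_card hα hβ₀).le (norm_nonneg _)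
  refine (pi_norm_le_iff_of_nonneg hbound).2 fun ⟨i, j⟩ ↦ ?_
  rcases eq_or_ne i j with rfl | hij
  · simpa [spread] using hbound
  · exact norm_sub_apply_arithMean_le hproj hα hβ hcomm hij v

theorem norm_arithMean_apply_arithMean_sub_le [Nonempty ι] (hproj : ∀ i, IsIdempotentElem (P i))
    (hα : 0 ≤ α) (hβ : ∀ i, ‖P i‖ ≤ β) (hcomm : ∀ i j, CommutesUpTo α (P i) (P j)) (v : X) :
    ‖arithMean 𝕜 P (arithMean 𝕜 P v) - arithMean 𝕜 P v‖ ≤ (α + β) * ‖spread P v‖ := by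
  have hβ₀ : 0 ≤ β := (norm_nonneg _).trans (hβ (Classical.arbitrary ι))
  have hmean : arithMean 𝕜 P (arithMean 𝕜 P v) - arithMean 𝕜 P v =
      arithMean 𝕜 fun k ↦ arithMean 𝕜 fun j ↦ P j (P k v) - P k v := by
    simp only [arithMean_sub, arithMean_const, ← arithMean_apply, ← map_arithMean]
  rw [hmean]
  refine norm_arithMean_le fun k ↦ norm_arithMean_le fun j ↦ ?_
  calc ‖P j (P k v) - P k v‖ ≤ (α + β) * ‖P j v - P k v‖ :=
        (hcomm j k).norm_apply_sub_le (hproj k) (hβ k) v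
    _ ≤ (α + β) * ‖spread P v‖ := by gcongr; exact norm_sub_le_norm_spread P j k v

end Spread

theorem fixedPoints_arithMean_eq_iInter_fixedPoints {ι 𝕜 X : Type*} [Fintype ι] [Nonempty ι]
    [NontriviallyNormedField 𝕜] [CharZero 𝕜] [NormedAddCommGroup X] [NormedSpace 𝕜 X]
    {P : ι → X →L[𝕜] X} {r : ℝ} (hr : r < 1)
    (hspread : ∀ v, ‖spread P (arithMean 𝕜 P v)‖ ≤ r * ‖spread P v‖) :
    Function.fixedPoints (arithMean 𝕜 P : X →L[𝕜] X) = ⋂ i, Function.fixedPoints (P i) := by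
  ext v
  simp only [Set.mem_iInter, Function.mem_fixedPoints, Function.IsFixedPt]
  constructor
  · intro hv i
    have hspread_zero : ‖spread P v‖ = 0 := by
      have hle := hspread v
      rw [hv] at hle
      nlinarith [norm_nonneg (spread P v)]
    have hagree (j : ι) : P j v = P i v := by
      rw [← sub_eq_zero, ← norm_le_zero_iff, ← hspread_zero]
      exact norm_sub_le_norm_spread P j i v
    simpa only [arithMean_apply, hagree, arithMean_const] using hv
  · intro hv
    simp only [arithMean_apply, hv, arithMean_const]

theorem averaged_projections_quick_uniform_convergence_general
    {ι 𝕜 X : Type*} [Fintype ι] [Nontrivial ι] [RCLike 𝕜] [NormedAddCommGroup X] [NormedSpace 𝕜 X]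
    [CompleteSpace X] {P : ι → X →L[𝕜] X} (hproj : ∀ i, IsIdempotentElem (P i))
    {α β : ℝ} (hα : 0 ≤ α) (hβ : ∀ i, ‖P i‖ ≤ β) (hcomm : ∀ i j, CommutesUpTo α (P i) (P j))
    (hsmall : ((Fintype.card ι : ℝ) - 2) * β <
      Fintype.card ι - 1 - (2 * Fintype.card ι - 3) * α) :
    ∃ (r C : ℝ) (Tinf : X →L[𝕜] X), 0 ≤ r ∧ r < 1 ∧ 0 ≤ C ∧
      (∀ n : ℕ, ‖Tinf - arithMean 𝕜 P ^ n‖ ≤ C * r ^ n) ∧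
      IsIdempotentElem Tinf ∧ Set.range Tinf = ⋂ i, Set.range (P i) := by
  have hβ₀ : 0 ≤ β := (norm_nonneg _).trans (hβ (Classical.arbitrary ι))
  set r := contractionRate (Fintype.card ι) α β
  have hr₀ : 0 < r := contractionRate_pos Fintype.one_lt_card hα hβ₀
  have hr₁ : r < 1 := contractionRate_lt_one Fintype.card_pos hsmall
  have hspread := norm_spread_arithMean_le hproj hα hβ hcomm
  obtain ⟨C, Tinf, hC, hTinf⟩ := exists_norm_sub_le_geometric hr₀ hr₁ <|
    norm_pow_add_two_sub_pow_add_one_le hr₀.le (add_nonneg hα hβ₀) hspread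
      (norm_arithMean_apply_arithMean_sub_le hproj hα hβ hcomm)
  have hlim : Filter.Tendsto (arithMean 𝕜 P ^ ·) Filter.atTop (nhds Tinf) := by
    refine tendsto_iff_norm_sub_tendsto_zero.2 <| squeeze_zero (fun _ ↦ norm_nonneg _)
      (fun n ↦ (norm_sub_rev _ _).trans_le (hTinf n)) ?_
    simpa using (tendsto_pow_atTop_nhds_zero_of_lt_one hr₀.le hr₁).const_mul C
  refine ⟨r, C, Tinf, hr₀.le, hr₁, hC, hTinf, isIdempotentElem_of_tendsto_pow hlim, ?_⟩
  simp only [range_eq_fixedPoints_of_tendsto_pow hlim,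
    fixedPoints_arithMean_eq_iInter_fixedPoints hr₁ hspread,
    fun i ↦ range_eq_fixedPoints_of_apply_apply (f := P i) (DFunLike.congr_fun (hproj i))]

/-- Quick uniform convergence of averaged projections: if the commutator defect constants and the
norms of the projections are small enough, then `Tⁿ = ((P₁+⋯+P_N)/N)ⁿ` converges geometrically in
operator norm to a projection onto `⋂ range (P i)`. -/
theorem averaged_projections_quick_uniform_convergence
    {X : Type*} [NormedAddCommGroup X] [NormedSpace ℂ X] [CompleteSpace X]
    (N : ℕ) (hN : 2 ≤ N) (P : Fin N → X →L[ℂ] X)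
    (hproj : ∀ i, P i ∘L P i = P i)
    (α β : ℝ) (hα : 0 ≤ α) (hβ : 0 ≤ β)
    (hPnorm : ∀ i, ‖P i‖ ≤ β)
    (hcomm : ∀ i j : Fin N, i < j → ∀ v : X,
      ‖(P i ∘L P j - P j ∘L P i) v‖ ≤ α * ‖(P i - P j) v‖)
    (hαsmall : (2 * (N : ℝ) - 3) * α < 1)
    (hβsmall : ((N : ℝ) - 2) * β < (N : ℝ) - 1 - (2 * (N : ℝ) - 3) * α)
    (T : X →L[ℂ] X) (hT : T = (N : ℂ)⁻¹ • ∑ i, P i) :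
    ∃ (r C : ℝ) (Tinf : X →L[ℂ] X),
      0 ≤ r ∧ r < 1 ∧ 0 ≤ C ∧
      (∀ n : ℕ, ‖Tinf - T ^ n‖ ≤ C * r ^ n) ∧
      Tinf ∘L Tinf = Tinf ∧
      Set.range Tinf = ⋂ i, Set.range (P i) := by
  have : Nontrivial (Fin N) := Fin.nontrivial_iff_two_le.2 hN
  obtain rfl : T = arithMean ℂ P := by rw [hT, arithMean, Fintype.card_fin]
  exact averaged_projections_quick_uniform_convergence_general hproj hα hPnorm
    (commutesUpTo_of_forall_lt hcomm) (by rwa [Fintype.card_fin])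
end

section
/- Let X be a Banach space, let P₁, P₂ be projections on X, and let P₁₂ be a compatible corner projection for (P₁,P₂). Set β = max{‖P₁‖, ‖P₂‖} and c = cos∠(P₁,P₂). If c < 1, then for every v ∈ X one has ‖(P₁P₂ − P₂P₁)v‖ ≤ (2(1+β)·c/(1−c))·‖(P₁ − P₂)v‖. -/
/-!
Put `a = (P₁ - Q) v` and `b = (P₂ - Q) v`, where `Q` is the corner projection. Compatibility makes
`P₁ - Q` and `P₂ - Q` idempotent, so `‖P₁ b‖ ≤ c ‖b‖` and `‖P₂ a‖ ≤ c ‖a‖`, and the commutator at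
`v` is `P₁ b - P₂ a`. The identities `a = P₁ ((P₁ - P₂) v) + P₁ b` and
`b = P₂ ((P₂ - P₁) v) + P₂ a` give
`‖a‖ + ‖b‖ ≤ (‖P₁‖ + ‖P₂‖) ‖(P₁ - P₂) v‖ + c (‖a‖ + ‖b‖)`, and since `c < 1` the last term can be
absorbed on the left.
-/

theorem comp_eq_right_of_range_subset {R M N : Type*} [Semiring R]
    [TopologicalSpace M] [AddCommMonoid M] [Module R M]
    [TopologicalSpace N] [AddCommMonoid N] [Module R N]
    {P : M →L[R] M} {Q : N →L[R] M} (hP : IsIdempotentElem P)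
    (hrange : Set.range Q ⊆ Set.range P) : P ∘L Q = Q := by
  ext x
  obtain ⟨y, hy⟩ := hrange (Set.mem_range_self x)
  rw [ContinuousLinearMap.comp_apply, ← hy]
  exact DFunLike.congr_fun hP.eq y

theorem norm_apply_apply_le_of_isIdempotentElem {𝕜 X Y : Type*} [NontriviallyNormedField 𝕜]
    [SeminormedAddCommGroup X] [NormedSpace 𝕜 X] [SeminormedAddCommGroup Y] [NormedSpace 𝕜 Y]
    (T : X →L[𝕜] Y) {P : X →L[𝕜] X} (hP : IsIdempotentElem P) (v : X) :
    ‖T (P v)‖ ≤ ‖T ∘L P‖ * ‖P v‖ := by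
  have hfix : P (P v) = P v := DFunLike.congr_fun hP.eq v
  simpa only [ContinuousLinearMap.comp_apply, hfix] using (T ∘L P).le_opNorm (P v)

section CornerProjection

variable {𝕜 X : Type*} [NontriviallyNormedField 𝕜] [SeminormedAddCommGroup X] [NormedSpace 𝕜 X]
  {P₁ P₂ Q : X →L[𝕜] X}

/-- The cosine `cos∠(P₁, P₂)` of the angle between two projections, relative to a compatible corner
projection `Q`, which is an explicit argument because `P₁` and `P₂` need not determine it. -/
noncomputable def cosAngle (P₁ P₂ Q : X →L[𝕜] X) : ℝ :=
  max ‖P₁ ∘L (P₂ - Q)‖ ‖P₂ ∘L (P₁ - Q)‖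

theorem cosAngle_comm (P₁ P₂ Q : X →L[𝕜] X) : cosAngle P₁ P₂ Q = cosAngle P₂ P₁ Q :=
  max_comm _ _

theorem cosAngle_nonneg (P₁ P₂ Q : X →L[𝕜] X) : 0 ≤ cosAngle P₁ P₂ Q :=
  le_max_of_le_left (norm_nonneg _)

theorem norm_apply_sub_apply_le_cosAngle (hP₂Q : IsIdempotentElem (P₂ - Q)) (v : X) :
    ‖P₁ ((P₂ - Q) v)‖ ≤ cosAngle P₁ P₂ Q * ‖(P₂ - Q) v‖ :=
  (norm_apply_apply_le_of_isIdempotentElem P₁ hP₂Q v).trans <| by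
    gcongr
    exact le_max_left _ _

theorem norm_sub_apply_le_add_cosAngle (hP₁ : IsIdempotentElem P₁) (hQ₁ : P₁ ∘L Q = Q)
    (hP₂Q : IsIdempotentElem (P₂ - Q)) (v : X) :
    ‖(P₁ - Q) v‖ ≤ ‖P₁‖ * ‖(P₁ - P₂) v‖ + cosAngle P₁ P₂ Q * ‖(P₂ - Q) v‖ := by
  have hsplit : P₁ - Q = P₁ ∘L (P₁ - P₂) + P₁ ∘L (P₂ - Q) := by
    rw [← ContinuousLinearMap.comp_add, sub_add_sub_cancel, ContinuousLinearMap.comp_sub, hQ₁]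
    exact congrArg (· - Q) hP₁.eq.symm
  calc ‖(P₁ - Q) v‖ = ‖P₁ ((P₁ - P₂) v) + P₁ ((P₂ - Q) v)‖ :=
        congrArg norm (DFunLike.congr_fun hsplit v)
    _ ≤ ‖P₁ ((P₁ - P₂) v)‖ + ‖P₁ ((P₂ - Q) v)‖ := norm_add_le _ _
    _ ≤ ‖P₁‖ * ‖(P₁ - P₂) v‖ + cosAngle P₁ P₂ Q * ‖(P₂ - Q) v‖ :=
      add_le_add (P₁.le_opNorm _) (norm_apply_sub_apply_le_cosAngle hP₂Q v)

theorem one_sub_cosAngle_mul_norm_add_norm_le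
    (hP₁ : IsIdempotentElem P₁) (hP₂ : IsIdempotentElem P₂)
    (hQ₁ : P₁ ∘L Q = Q) (hQ₂ : P₂ ∘L Q = Q)
    (hP₁Q : IsIdempotentElem (P₁ - Q)) (hP₂Q : IsIdempotentElem (P₂ - Q)) (v : X) :
    (1 - cosAngle P₁ P₂ Q) * (‖(P₁ - Q) v‖ + ‖(P₂ - Q) v‖) ≤
      (‖P₁‖ + ‖P₂‖) * ‖(P₁ - P₂) v‖ := by
  have hbound₁ := norm_sub_apply_le_add_cosAngle hP₁ hQ₁ hP₂Q v
  have hbound₂ := norm_sub_apply_le_add_cosAngle hP₂ hQ₂ hP₁Q v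
  have hsymm : ‖(P₂ - P₁) v‖ = ‖(P₁ - P₂) v‖ := norm_sub_rev (P₂ v) (P₁ v)
  rw [cosAngle_comm, hsymm] at hbound₂
  linarith

theorem norm_commutator_apply_le_cosAngle_mul (hQ₁ : P₁ ∘L Q = Q) (hQ₂ : P₂ ∘L Q = Q)
    (hP₁Q : IsIdempotentElem (P₁ - Q)) (hP₂Q : IsIdempotentElem (P₂ - Q)) (v : X) :
    ‖(P₁ ∘L P₂ - P₂ ∘L P₁) v‖ ≤ cosAngle P₁ P₂ Q * (‖(P₁ - Q) v‖ + ‖(P₂ - Q) v‖) := by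
  have hsplit : P₁ ∘L P₂ - P₂ ∘L P₁ = P₁ ∘L (P₂ - Q) - P₂ ∘L (P₁ - Q) := by
    rw [ContinuousLinearMap.comp_sub, ContinuousLinearMap.comp_sub, hQ₁, hQ₂,
      sub_sub_sub_cancel_right]
  have hbound₁ := norm_apply_sub_apply_le_cosAngle (P₁ := P₁) hP₂Q v
  have hbound₂ := norm_apply_sub_apply_le_cosAngle (P₁ := P₂) hP₁Q v
  rw [cosAngle_comm] at hbound₂
  calc ‖(P₁ ∘L P₂ - P₂ ∘L P₁) v‖ = ‖P₁ ((P₂ - Q) v) - P₂ ((P₁ - Q) v)‖ :=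
        congrArg norm (DFunLike.congr_fun hsplit v)
    _ ≤ ‖P₁ ((P₂ - Q) v)‖ + ‖P₂ ((P₁ - Q) v)‖ := norm_sub_le _ _
    _ ≤ cosAngle P₁ P₂ Q * (‖(P₁ - Q) v‖ + ‖(P₂ - Q) v‖) := by linarith

theorem commutator_bound_of_angle_general
    (hP₁ : P₁ ∘L P₁ = P₁) (hP₂ : P₂ ∘L P₂ = P₂) (hQ : Q ∘L Q = Q)
    (hrange : Set.range Q ⊆ Set.range P₁ ∩ Set.range P₂)
    (hc₁ : Q ∘L P₁ = Q) (hc₂ : Q ∘L P₂ = Q) (hc : cosAngle P₁ P₂ Q < 1) (v : X) :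
    ‖(P₁ ∘L P₂ - P₂ ∘L P₁) v‖ ≤
      (‖P₁‖ + ‖P₂‖) * cosAngle P₁ P₂ Q / (1 - cosAngle P₁ P₂ Q) * ‖(P₁ - P₂) v‖ := by
  obtain ⟨hrange₁, hrange₂⟩ := Set.subset_inter_iff.mp hrange
  have hQ₁ : P₁ ∘L Q = Q := comp_eq_right_of_range_subset hP₁ hrange₁
  have hQ₂ : P₂ ∘L Q = Q := comp_eq_right_of_range_subset hP₂ hrange₂
  have hP₁Q : IsIdempotentElem (P₁ - Q) := IsIdempotentElem.sub hQ hP₁ hc₁ hQ₁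
  have hP₂Q : IsIdempotentElem (P₂ - Q) := IsIdempotentElem.sub hQ hP₂ hc₂ hQ₂
  have hsum : ‖(P₁ - Q) v‖ + ‖(P₂ - Q) v‖ ≤
      (‖P₁‖ + ‖P₂‖) * ‖(P₁ - P₂) v‖ / (1 - cosAngle P₁ P₂ Q) :=
    (le_div_iff₀' (sub_pos.mpr hc)).mpr
      (one_sub_cosAngle_mul_norm_add_norm_le hP₁ hP₂ hQ₁ hQ₂ hP₁Q hP₂Q v)
  calc ‖(P₁ ∘L P₂ - P₂ ∘L P₁) v‖
      ≤ cosAngle P₁ P₂ Q * (‖(P₁ - Q) v‖ + ‖(P₂ - Q) v‖) :=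
        norm_commutator_apply_le_cosAngle_mul hQ₁ hQ₂ hP₁Q hP₂Q v
    _ ≤ cosAngle P₁ P₂ Q * ((‖P₁‖ + ‖P₂‖) * ‖(P₁ - P₂) v‖ / (1 - cosAngle P₁ P₂ Q)) :=
        mul_le_mul_of_nonneg_left hsum (cosAngle_nonneg P₁ P₂ Q)
    _ = (‖P₁‖ + ‖P₂‖) * cosAngle P₁ P₂ Q / (1 - cosAngle P₁ P₂ Q) * ‖(P₁ - P₂) v‖ := by ring

end CornerProjection

/-- If `P₁, P₂` are projections on a Banach space with a compatible corner projection `P₁₂`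
(for which `cos∠(P₁,P₂) = max{‖P₁∘(P₂−P₁₂)‖, ‖P₂∘(P₁−P₁₂)‖} < 1`), then for every `v`,
`‖(P₁P₂ − P₂P₁)v‖ ≤ (2(1+β)c/(1−c))·‖(P₁−P₂)v‖`, where `β = max{‖P₁‖,‖P₂‖}`. -/
theorem commutator_bound_of_angle
    {X : Type*} [NormedAddCommGroup X] [NormedSpace ℂ X] [CompleteSpace X]
    (P₁ P₂ P₁₂ : X →L[ℂ] X)
    (hP₁ : P₁ ∘L P₁ = P₁) (hP₂ : P₂ ∘L P₂ = P₂) (hP₁₂ : P₁₂ ∘L P₁₂ = P₁₂)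
    (hrange : Set.range P₁₂ = Set.range P₁ ∩ Set.range P₂)
    (hc₁ : P₁₂ ∘L P₁ = P₁₂) (hc₂ : P₁₂ ∘L P₂ = P₁₂)
    (β c : ℝ)
    (hβ : β = max ‖P₁‖ ‖P₂‖)
    (hcos : c = max ‖P₁ ∘L (P₂ - P₁₂)‖ ‖P₂ ∘L (P₁ - P₁₂)‖)
    (hc : c < 1) :
    ∀ v : X, ‖(P₁ ∘L P₂ - P₂ ∘L P₁) v‖ ≤ 2 * (1 + β) * c / (1 - c) * ‖(P₁ - P₂) v‖ := by
  intro v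
  have hconst : ‖P₁‖ + ‖P₂‖ ≤ 2 * (1 + β) := by
    linarith [hβ ▸ le_max_left ‖P₁‖ ‖P₂‖, hβ ▸ le_max_right ‖P₁‖ ‖P₂‖]
  have hc₀ : 0 ≤ c := hcos ▸ cosAngle_nonneg P₁ P₂ P₁₂
  have hc_sub : 0 ≤ 1 - c := sub_nonneg.mpr hc.le
  subst hcos
  exact (commutator_bound_of_angle_general hP₁ hP₂ hP₁₂ hrange.subset hc₁ hc₂ hc v).trans
    (by unfold cosAngle; gcongr)
end
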